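/- Let a ∈ ℝ with a² > 2, let 𝔭(t) = 2(2−a²)t² − a² (so 𝔭(t) ≠ 0 for all t ∈ ℝ), let 𝒲_a be the weight matrix 𝒲_a(t) = (e^{−t²}/𝔭(t)²)·[[ (a²/(4(a²−2)))𝔭(t)² + 𝔭(t)/(a²−2) − a², a(𝔭(t)/(a²−2) − 2)t ],[ a(𝔭(t)/(a²−2) − 2)t, 2(a²(a²−2) − 𝔭(t))/(a²−2)² ]], let M = diag(0,1), and let 𝒟 be the second order operator 𝒟(y) = y''ℱ₂ + y'ℱ₁ + yℱ₀ with ℱ₂(t) = (1/𝔭(t))·[[ −a²(2t²+1), −(a²−2)at(2t²+1) ],[ 4at/(a²−2), 4t² ]], ℱ₁(t) = (1/𝔭(t)²)·[[ −2t(𝔭(t)² + 4𝔭(t) − 4a²), (4(a²−2)t²/a)(−𝔭(t) + 2a²) ],[ 4(𝔭(t)+2a²)(𝔭(t)−a²)/(a(a²−2)), −8a²t ]], ℱ₀ = diag(2 − 4/a², 0). Then for every ζ ≥ 0 there exist matrix polynomials 𝒫ₙ^ζ, n ∈ ℕ∖{1}, each of degree n with nonsingular leading coefficient, such that: (i) they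 are mutually orthogonal with respect to the form ⟨P,Q⟩ = (1/√π)∫_ℝ P(t)𝒲_a(t)Q(t)ᵀ dt + ζ·P(0)·M·Q(0)ᵀ, with ⟨𝒫ₙ^ζ,𝒫ₙ^ζ⟩ nonsingular; and (ii) for each n there is a matrix Bₙ with 𝒟(𝒫ₙ^ζ) = Bₙ·𝒫ₙ^ζ. -/

import Mathlib

/-!
Everything is done row by row. Write `c = a² - 2 > 0`, so that `𝔭 = -2ct² - a²`, and let a row
`y = (y₀, y₁)` of polynomials be *regular* when `c t y₀' - a y₁' = 𝔭 r` for some polynomial `r`.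
On regular rows the poles of `𝒟` cancel, and `𝒟` is given by polynomial formulas in `y₀`, `r` and
their derivatives (`maps_aux`). For every `n ≠ 1` there are two regular rows `brow a n 0`,
`brow a n 1` of degree `n` whose leading coefficients are the two unit vectors, and `𝒟` maps each
of them into the span of those of index at most `n` (`maps_brow`); degree one is missing because
the only regular rows of degree at most one are constant.

The operator is symmetric for the form with the point mass. For the integral part, the Lagrange
identity (`hasDerivAt_conc`) exhibits `𝒟(y) 𝒲 zᵀ - y 𝒲 𝒟(z)ᵀ` as the derivative of an integrable
function, so that its integral vanishes; for the point mass, the second entry of `𝒟(y)` vanishes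
at `0`, so that `𝒟(y)(0) M = 0`. The form is positive definite, because `𝒲` is.

Consequently, with `Slt a n` the span of the rows `brow a k i` with `k < n`, the rows
`brow a n i` minus their orthogonal projections to `Slt a n` form the rows of `𝒫ₙ`. By symmetry,
`𝒟` preserves the orthogonal complement of `Slt a n` in `Slt a (n + 1)`, which these two rows
span; this gives the matrix `Bₙ` (`exists_eigen`).
-/

open MeasureTheory Matrix Polynomial

noncomputable section

abbrev M2 := Matrix (Fin 2) (Fin 2) ℝ

abbrev MP2 := Matrix (Fin 2) (Fin 2) (Polynomial ℝ)

def mpEval (P : MP2) (t : ℝ) : M2 := Matrix.of fun i j => (P i j).eval t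

def matDeriv (f : ℝ → M2) : ℝ → M2 :=
  fun t => Matrix.of fun i j => deriv (fun s => f s i j) t

/-- `𝔭(t) = 2(2 − a²)t² − a²`. -/
def pfrak (a t : ℝ) : ℝ := 2 * (2 - a ^ 2) * t ^ 2 - a ^ 2

/-- the exceptional weight `𝒲_a`. -/
def Wexc (a : ℝ) (t : ℝ) : M2 :=
  (Real.exp (-t ^ 2) / (pfrak a t) ^ 2) •
    !![a ^ 2 / (4 * (a ^ 2 - 2)) * (pfrak a t) ^ 2 + pfrak a t / (a ^ 2 - 2) - a ^ 2,
        a * (pfrak a t / (a ^ 2 - 2) - 2) * t;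
      a * (pfrak a t / (a ^ 2 - 2) - 2) * t,
        2 * (a ^ 2 * (a ^ 2 - 2) - pfrak a t) / (a ^ 2 - 2) ^ 2]

/-- the coefficient `ℱ₂` of the second order operator `𝒟`. -/
def F2cal (a : ℝ) (t : ℝ) : M2 :=
  (1 / pfrak a t) •
    !![-a ^ 2 * (2 * t ^ 2 + 1), -(a ^ 2 - 2) * a * t * (2 * t ^ 2 + 1);
      4 * a * t / (a ^ 2 - 2), 4 * t ^ 2]

/-- the coefficient `ℱ₁` of the second order operator `𝒟`. -/
def F1cal (a : ℝ) (t : ℝ) : M2 :=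
  (1 / (pfrak a t) ^ 2) •
    !![-2 * t * ((pfrak a t) ^ 2 + 4 * pfrak a t - 4 * a ^ 2),
        4 * (a ^ 2 - 2) * t ^ 2 / a * (-pfrak a t + 2 * a ^ 2);
      4 * (pfrak a t + 2 * a ^ 2) * (pfrak a t - a ^ 2) / (a * (a ^ 2 - 2)),
        -8 * a ^ 2 * t]

/-- the coefficient `ℱ₀` of the second order operator `𝒟`. -/
def F0cal (a : ℝ) : M2 := !![2 - 4 / a ^ 2, 0; 0, 0]

/-- `𝒟(y) = y''ℱ₂ + y'ℱ₁ + yℱ₀` applied to a matrix polynomial, as a function. -/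
def Dcal (a : ℝ) (P : MP2) (t : ℝ) : M2 :=
  matDeriv (matDeriv (fun s => mpEval P s)) t * F2cal a t
    + matDeriv (fun s => mpEval P s) t * F1cal a t + mpEval P t * F0cal a

/-- the sesquilinear form `⟨P,Q⟩ = (1/√π)∫ P𝒲_aQᵀ dt + ζ·P(0)·diag(0,1)·Q(0)ᵀ`. -/
def ipZeta (a ζ : ℝ) (P Q : MP2) : M2 :=
  (Matrix.of fun i j : Fin 2 =>
    (1 / Real.sqrt Real.pi) * ∫ t : ℝ, (mpEval P t * Wexc a t * (mpEval Q t)ᵀ) i j)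
  + ζ • (mpEval P 0 * Matrix.diagonal ![(0 : ℝ), 1] * (mpEval Q 0)ᵀ)

/-! ### The scalar density -/

lemma pfrak_neg {a : ℝ} (ha : a ^ 2 > 2) (t : ℝ) : pfrak a t < 0 := by
  unfold pfrak; nlinarith [mul_nonneg (sub_nonneg.2 ha.le) (sq_nonneg t)]

/-- The scalar density `ρ(t) = e^{-t²}/𝔭(t)²` factored out of the weight `𝒲_a`. -/
def rho (a t : ℝ) : ℝ := Real.exp (-t ^ 2) / (pfrak a t) ^ 2

lemma rho_pos {a : ℝ} (ha : a ^ 2 > 2) (t : ℝ) : 0 < rho a t :=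
  div_pos (Real.exp_pos _) (pow_pos_of_ne (pfrak_neg ha t).ne)
where pow_pos_of_ne {x : ℝ} (h : x ≠ 0) : 0 < x ^ 2 := by positivity

lemma rho_continuous {a : ℝ} (ha : a ^ 2 > 2) : Continuous (rho a) := by
  unfold rho
  refine Continuous.div (by fun_prop) (by unfold pfrak; fun_prop) fun t => ?_
  exact pow_ne_zero _ (pfrak_neg ha t).ne

lemma rho_hasDerivAt {a : ℝ} (ha : a ^ 2 > 2) (t : ℝ) :
    HasDerivAt (rho a) (rho a t * (-2 * t + 8 * (a ^ 2 - 2) * t / pfrak a t)) t := by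
  have hp := (pfrak_neg ha t).ne
  have h1 : HasDerivAt (pfrak a) (-(4 * (a ^ 2 - 2) * t)) t := by
    have := (((hasDerivAt_id t).pow 2).const_mul (2 * (2 - a ^ 2))).sub_const (a ^ 2)
    refine this.congr_deriv ?_
    simp; ring
  have h2 : HasDerivAt (fun s : ℝ => Real.exp (-s ^ 2)) (Real.exp (-t ^ 2) * (-(2 * t))) t := by
    have := ((hasDerivAt_id t).pow 2).neg.exp
    refine this.congr_deriv ?_
    simp
  refine (h2.div (h1.pow 2) (pow_ne_zero 2 hp)).congr_deriv ?_
  unfold rho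
  simp only [Pi.pow_apply]
  field_simp
  ring

/-- Polynomials are integrable against `ρ`, since `ρ(t) ≤ e^{-t²}/a⁴`. -/
lemma integrable_eval_mul_rho {a : ℝ} (ha : a ^ 2 > 2) (p : ℝ[X]) :
    Integrable fun t => p.eval t * rho a t := by
  have h1 : Integrable fun t => p.eval t * Real.exp (-t ^ 2) := by
    induction p using Polynomial.induction_on' with
    | add p q hp hq => exact (hp.add hq).congr (.of_forall fun t => by simp [add_mul])
    | monomial n c =>
      have := (integrable_rpow_mul_exp_neg_mul_sq one_pos
        (by linarith [n.cast_nonneg (α := ℝ)] : (-1 : ℝ) < n)).const_mul c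
      simpa [mul_assoc] using this
  have h2 : ∀ t, ‖p.eval t * rho a t‖ ≤ ‖p.eval t * Real.exp (-t ^ 2)‖ * (1 / a ^ 4) := by
    intro t
    have ha4 : 0 < a ^ 4 := by nlinarith
    have hle : a ^ 4 ≤ pfrak a t ^ 2 := by
      unfold pfrak
      nlinarith [mul_nonneg (sub_nonneg.2 ha.le) (sq_nonneg t),
        mul_nonneg (sq_nonneg a) (mul_nonneg (sub_nonneg.2 ha.le) (sq_nonneg t))]
    have : rho a t ≤ Real.exp (-t ^ 2) * (1 / a ^ 4) := by
      rw [rho, mul_one_div]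
      exact div_le_div_of_nonneg_left (Real.exp_pos _).le ha4 hle
    rw [norm_mul, norm_mul, Real.norm_of_nonneg (rho_pos ha t).le,
      Real.norm_of_nonneg (Real.exp_pos _).le, mul_assoc]
    gcongr
  exact (h1.norm.mul_const (1 / a ^ 4)).mono'
    (p.continuous.mul (rho_continuous ha)).aestronglyMeasurable (.of_forall h2)

/-! ### The bilinear form on rows -/

/-- `𝔭` as a polynomial. -/
def pPoly (a : ℝ) : ℝ[X] := C (2 * (2 - a ^ 2)) * X ^ 2 - C (a ^ 2)

lemma pPoly_eval (a t : ℝ) : (pPoly a).eval t = pfrak a t := by simp [pPoly, pfrak]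

/-- The polynomial matrix `N`, for which `𝒲_a = ρ N`. -/
def Nmat (a : ℝ) : MP2 :=
  !![C (a ^ 2 / (4 * (a ^ 2 - 2))) * pPoly a ^ 2 + C (1 / (a ^ 2 - 2)) * pPoly a - C (a ^ 2),
      C a * (C (1 / (a ^ 2 - 2)) * pPoly a - 2) * X;
    C a * (C (1 / (a ^ 2 - 2)) * pPoly a - 2) * X,
      C (2 / (a ^ 2 - 2) ^ 2) * (C (a ^ 2 * (a ^ 2 - 2)) - pPoly a)]

lemma Wexc_eq (a t : ℝ) (i j : Fin 2) : Wexc a t i j = rho a t * (Nmat a i j).eval t := by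
  fin_cases i <;> fin_cases j <;> simp [Wexc, rho, Nmat, pPoly_eval] <;> ring_nf <;> simp

/-- Row vector polynomials. -/
abbrev Row := Fin 2 → ℝ[X]

/-- The polynomial `y N zᵀ`, so that `y 𝒲_a zᵀ = ρ · y N zᵀ`. -/
def quad (a : ℝ) (y z : Row) : ℝ[X] := ∑ i, ∑ j, y i * Nmat a i j * z j

/-- The functional `p ↦ (1/√π) ∫ p ρ`. -/
def Lfun (a : ℝ) (p : ℝ[X]) : ℝ := 1 / Real.sqrt Real.pi * ∫ t, p.eval t * rho a t

lemma Lfun_add {a : ℝ} (ha : a ^ 2 > 2) (p q : ℝ[X]) : Lfun a (p + q) = Lfun a p + Lfun a q := by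
  simp only [Lfun, eval_add, add_mul]
  rw [integral_add (integrable_eval_mul_rho ha p) (integrable_eval_mul_rho ha q)]
  ring

lemma Lfun_smul (a : ℝ) (c : ℝ) (p : ℝ[X]) : Lfun a (c • p) = c * Lfun a p := by
  simp only [Lfun, eval_smul, smul_eq_mul, mul_assoc]
  rw [integral_const_mul]
  ring

/-- The form `⟨y, z⟩ = (1/√π) ∫ y 𝒲_a zᵀ dt + ζ y₁(0) z₁(0)` on rows, whose values on the rows of
`P`, `Q` are the entries of `⟨P, Q⟩`. -/
def form {a : ℝ} (ha : a ^ 2 > 2) (ζ : ℝ) : LinearMap.BilinForm ℝ Row :=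
  LinearMap.mk₂ ℝ (fun y z => Lfun a (quad a y z) + ζ * ((y 1).eval 0 * (z 1).eval 0))
    (fun y y' z => by
      have : quad a (y + y') z = quad a y z + quad a y' z := by simp [quad]; ring
      rw [this, Lfun_add ha]; simp; ring)
    (fun c y z => by
      have : quad a (c • y) z = c • quad a y z := by simp [quad, smul_add]
      rw [this, Lfun_smul]; simp; ring)
    (fun y z z' => by
      have : quad a y (z + z') = quad a y z + quad a y z' := by simp [quad]; ring
      rw [this, Lfun_add ha]; simp; ring)
    (fun c y z => by
      have : quad a y (c • z) = c • quad a y z := by simp [quad, smul_add]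
      rw [this, Lfun_smul]; simp; ring)

lemma form_apply {a : ℝ} (ha : a ^ 2 > 2) (ζ : ℝ) (y z : Row) :
    form ha ζ y z = Lfun a (quad a y z) + ζ * ((y 1).eval 0 * (z 1).eval 0) := rfl

lemma ipZeta_apply {a : ℝ} (ha : a ^ 2 > 2) (ζ : ℝ) (P Q : MP2) (i j : Fin 2) :
    ipZeta a ζ P Q i j = form ha ζ (P i) (Q j) := by
  rw [form_apply]
  simp only [ipZeta, Matrix.add_apply, Matrix.of_apply, Lfun]
  congr 1
  · congr 2
    ext t
    simp [Matrix.mul_apply, Wexc_eq, mpEval, quad]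
    ring
  · simp [Matrix.mul_apply, mpEval, Matrix.diagonal]

lemma form_symm {a : ℝ} (ha : a ^ 2 > 2) (ζ : ℝ) (y z : Row) :
    form ha ζ y z = form ha ζ z y := by
  have : quad a y z = quad a z y := by simp [quad, Nmat]; ring
  rw [form_apply, form_apply, this]
  ring

/-- Pointwise positive definiteness of `N`, by completing the square: `N₁₁ > 0` (indices from `0`)
and `det N = (a² - 1) 𝔭² / (2(a² - 2)) > 0`. -/
lemma quad_nonneg {a : ℝ} (ha : a ^ 2 > 2) (y : Row) (t : ℝ) : 0 ≤ (quad a y y).eval t ∧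
    ((quad a y y).eval t = 0 → ∀ i, (y i).eval t = 0) := by
  have hp := pfrak_neg ha t
  have hc : 0 < a ^ 2 - 2 := by linarith
  set u := (y 0).eval t
  set v := (y 1).eval t
  have h22 : 0 < 2 * (a ^ 2 * (a ^ 2 - 2) - pfrak a t) / (a ^ 2 - 2) ^ 2 := by
    have : 0 < a ^ 2 * (a ^ 2 - 2) := by positivity
    exact div_pos (by linarith) (by positivity)
  have key : 2 * (a ^ 2 * (a ^ 2 - 2) - pfrak a t) / (a ^ 2 - 2) ^ 2 * (quad a y y).eval t =
      (2 * (a ^ 2 * (a ^ 2 - 2) - pfrak a t) / (a ^ 2 - 2) ^ 2 * v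
        + a * (pfrak a t / (a ^ 2 - 2) - 2) * t * u) ^ 2
      + (a ^ 2 - 1) / (2 * (a ^ 2 - 2)) * pfrak a t ^ 2 * u ^ 2 := by
    simp [quad, Nmat, pPoly_eval]
    change _ * (u * _ * u + u * _ * v + (v * _ * u + v * _ * v)) = _
    unfold pfrak
    field_simp
    ring
  have hd : 0 < (a ^ 2 - 1) / (2 * (a ^ 2 - 2)) * pfrak a t ^ 2 := by
    have : 0 < a ^ 2 - 1 := by linarith
    have := hp.ne
    positivity
  refine ⟨?_, fun h0 => ?_⟩
  · refine nonneg_of_mul_nonneg_right (a := 2 * (a ^ 2 * (a ^ 2 - 2) - pfrak a t) / (a ^ 2 - 2) ^ 2) ?_ h22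
    rw [key]; positivity
  · rw [h0, mul_zero] at key
    have hu : u = 0 := by
      by_contra hu
      have := mul_pos hd (pow_pos (abs_pos.2 hu) 2)
      rw [sq_abs] at this
      nlinarith [sq_nonneg (2 * (a ^ 2 * (a ^ 2 - 2) - pfrak a t) / (a ^ 2 - 2) ^ 2 * v
        + a * (pfrak a t / (a ^ 2 - 2) - 2) * t * u)]
    rw [hu] at key
    have hv : v = 0 := by
      have : (2 * (a ^ 2 * (a ^ 2 - 2) - pfrak a t) / (a ^ 2 - 2) ^ 2 * v) ^ 2 = 0 := by
        linear_combination -key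
      rcases mul_eq_zero.1 (pow_eq_zero_iff (two_ne_zero)|>.1 this) with h | h
      · exact absurd h h22.ne'
      · exact h
    intro i
    fin_cases i
    exacts [hu, hv]

lemma form_posDef {a : ℝ} (ha : a ^ 2 > 2) {ζ : ℝ} (hζ : 0 ≤ ζ) (y : Row)
    (h : form ha ζ y y = 0) : y = 0 := by
  rw [form_apply] at h
  have hnn : ∀ t, 0 ≤ (quad a y y).eval t * rho a t := fun t =>
    mul_nonneg (quad_nonneg ha y t).1 (rho_pos ha t).le
  have hpi : 0 < 1 / Real.sqrt Real.pi := by positivity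
  have h1 : 0 ≤ ∫ t, (quad a y y).eval t * rho a t := integral_nonneg hnn
  have h2 : 0 ≤ ζ * ((y 1).eval 0 * (y 1).eval 0) := mul_nonneg hζ (mul_self_nonneg _)
  have h3 : ∫ t, (quad a y y).eval t * rho a t = 0 := by
    have : 0 ≤ Lfun a (quad a y y) := mul_nonneg hpi.le h1
    have : Lfun a (quad a y y) = 0 := by linarith
    exact (mul_eq_zero.1 this).resolve_left hpi.ne'
  rw [integral_eq_zero_iff_of_nonneg hnn (integrable_eval_mul_rho ha _)] at h3
  have h4 := (Continuous.ae_eq_iff_eq volume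
    ((quad a y y).continuous.mul (rho_continuous ha)) continuous_zero).1 h3
  ext1 i
  refine Polynomial.funext fun t => ?_
  have h5 : (quad a y y).eval t * rho a t = 0 := congrFun h4 t
  simpa using (quad_nonneg ha y t).2 ((mul_eq_zero.1 h5).resolve_right (rho_pos ha t).ne') i

/-! ### Symmetry of the operator -/

/-- The operator `𝒟` applied to a row of polynomials, as a function of `t`. Its values are rational
functions in general. -/
def Drow (a : ℝ) (y : Row) (t : ℝ) (j : Fin 2) : ℝ :=
  ∑ i, ((derivative (derivative (y i))).eval t * F2cal a t i j
    + (derivative (y i)).eval t * F1cal a t i j + (y i).eval t * F0cal a i j)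

lemma Dcal_apply (a : ℝ) (P : MP2) (t : ℝ) (i j : Fin 2) : Dcal a P t i j = Drow a (P i) t j := by
  have h : matDeriv (fun s => mpEval P s) =
      fun s => mpEval (Matrix.of fun i j => derivative (P i j)) s := by
    ext s i j; simp [matDeriv, mpEval]
  have h' : matDeriv (matDeriv (fun s => mpEval P s)) =
      fun s => mpEval (Matrix.of fun i j => derivative (derivative (P i j))) s := by
    rw [h]; ext s i j; simp [matDeriv, mpEval]
  unfold Dcal
  rw [h', h]
  simp [Matrix.mul_apply, mpEval, Drow]
  ring

/-- `𝒟(y)` is the polynomial row `w`. -/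
def Maps (a : ℝ) (y w : Row) : Prop := ∀ t j, Drow a y t j = (w j).eval t

/-- The polynomial matrix with `ℱ₂ 𝒲_a = ρ G`; it is symmetric. -/
def Gmat (a : ℝ) : MP2 :=
  !![C (a ^ 2 * (a ^ 2 - 2) / 4) * ((2 * X ^ 2 + 1) * (2 * X ^ 2 + 1)), -(C a * X * (2 * X ^ 2 + 1));
    -(C a * X * (2 * X ^ 2 + 1)), C (4 / (a ^ 2 - 2)) * X ^ 2]

/-- The antisymmetric polynomial matrix with `ℱ₁ 𝒲_a = (ρ G)' + ρ K`. -/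
def Kmat (a : ℝ) : MP2 := !![0, -(C (1 / a) * pPoly a); C (1 / a) * pPoly a, 0]

lemma F2_mul_N {a : ℝ} (ha : a ^ 2 > 2) (t : ℝ) (i j : Fin 2) :
    ∑ l, F2cal a t i l * (Nmat a l j).eval t = (Gmat a i j).eval t := by
  have ha0 : a ≠ 0 := by rintro rfl; norm_num at ha
  have hc : a ^ 2 - 2 ≠ 0 := by linarith
  have hp := (pfrak_neg ha t).ne
  unfold pfrak at hp
  fin_cases i <;> fin_cases j
  all_goals
    simp [F2cal, Nmat, Gmat, pPoly, pfrak]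
    try field_simp
    try ring

/-- The identity `ℱ₁ 𝒲 = (ρ G)' + ρ K` divided by `ρ`; the bracket is `ρ'/ρ`. -/
lemma F1_mul_N {a : ℝ} (ha : a ^ 2 > 2) (t : ℝ) (i j : Fin 2) :
    ∑ l, F1cal a t i l * (Nmat a l j).eval t = (derivative (Gmat a i j)).eval t
      + (-2 * t + 8 * (a ^ 2 - 2) * t / pfrak a t) * (Gmat a i j).eval t
      + (Kmat a i j).eval t := by
  have ha0 : a ≠ 0 := by rintro rfl; norm_num at ha
  have hc : a ^ 2 - 2 ≠ 0 := by linarith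
  have hp := (pfrak_neg ha t).ne
  unfold pfrak at hp
  fin_cases i <;> fin_cases j
  all_goals
    simp [F1cal, Nmat, Gmat, Kmat, pPoly, pfrak, -map_pow]
    try field_simp
    try ring

/-- The identity `ℱ₀ 𝒲 - 𝒲 ℱ₀ᵀ = (ρ K)'` divided by `ρ`; the bracket is `ρ'/ρ`. -/
lemma F0_mul_N {a : ℝ} (ha : a ^ 2 > 2) (t : ℝ) (i j : Fin 2) :
    ∑ l, (F0cal a i l * (Nmat a l j).eval t - (Nmat a i l).eval t * F0cal a j l)
      = (derivative (Kmat a i j)).eval t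
      + (-2 * t + 8 * (a ^ 2 - 2) * t / pfrak a t) * (Kmat a i j).eval t := by
  have ha0 : a ≠ 0 := by rintro rfl; norm_num at ha
  have hc : a ^ 2 - 2 ≠ 0 := by linarith
  have hp := (pfrak_neg ha t).ne
  unfold pfrak at hp
  fin_cases i <;> fin_cases j
  all_goals
    simp [F0cal, Nmat, Kmat, pPoly, pfrak, -map_pow]
    try field_simp
    try ring

/-- The bilinear concomitant `y' G zᵀ - y G z'ᵀ + y K zᵀ`. -/
def conc (a : ℝ) (y z : Row) : ℝ[X] :=
  ∑ i, ∑ j, ((derivative (y i) * z j - y i * derivative (z j)) * Gmat a i j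
    + y i * z j * Kmat a i j)

/-- Lagrange identity: `𝒟(y) 𝒲 zᵀ - y 𝒲 𝒟(z)ᵀ` is the derivative of `ρ` times the concomitant. -/
lemma hasDerivAt_conc {a : ℝ} (ha : a ^ 2 > 2) {y z w k : Row} (hy : Maps a y w) (hz : Maps a z k)
    (t : ℝ) :
    HasDerivAt (fun s => (conc a y z).eval s * rho a s)
      ((quad a w z - quad a y k).eval t * rho a t) t := by
  refine (((conc a y z).hasDerivAt t).mul (rho_hasDerivAt ha t)).congr_deriv ?_
  rw [← mul_assoc, mul_right_comm, ← add_mul]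
  congr 1
  have hp := (pfrak_neg ha t).ne
  have hN : Nmat a 1 0 = Nmat a 0 1 := rfl
  have hG : Gmat a 1 0 = Gmat a 0 1 := rfl
  have h2 := F2_mul_N ha t
  have h1 := F1_mul_N ha t
  have h0 := F0_mul_N ha t
  simp only [Fin.sum_univ_two] at h2 h1 h0
  simp only [quad, conc, Fin.sum_univ_two, eval_sub, eval_add, eval_mul, derivative_add,
    derivative_sub, derivative_mul, ← hy t, ← hz t, Drow]
  have hK00 : (Kmat a 0 0) = 0 := rfl
  have hK11 : (Kmat a 1 1) = 0 := rfl
  have hK10 : Kmat a 1 0 = -Kmat a 0 1 := by simp [Kmat]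
  have h2_00 := h2 0 0
  have h2_01 := h2 0 1
  have h2_10 := h2 1 0
  have h2_11 := h2 1 1
  have h1_00 := h1 0 0
  have h1_01 := h1 0 1
  have h1_10 := h1 1 0
  have h1_11 := h1 1 1
  have h0_00 := h0 0 0
  have h0_01 := h0 0 1
  have h0_10 := h0 1 0
  have h0_11 := h0 1 1
  simp only [hN, hG, hK00, hK11, hK10, derivative_neg, eval_neg, derivative_zero, eval_zero] at h2_00 h2_01 h2_10 h2_11 h1_00 h1_01 h1_10 h1_11 h0_00 h0_01 h0_10 h0_11 ⊢
  linear_combination -((((derivative (derivative (y 0))).eval t) * ((z 0).eval t) - ((derivative (derivative (z 0))).eval t) * ((y 0).eval t)) * h2_00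
    + (((derivative (y 0)).eval t) * ((z 0).eval t) - ((derivative (z 0)).eval t) * ((y 0).eval t)) * h1_00
    + ((y 0).eval t) * ((z 0).eval t) * h0_00
    + (((derivative (derivative (y 0))).eval t) * ((z 1).eval t) - ((derivative (derivative (z 0))).eval t) * ((y 1).eval t)) * h2_01
    + (((derivative (y 0)).eval t) * ((z 1).eval t) - ((derivative (z 0)).eval t) * ((y 1).eval t)) * h1_01
    + ((y 0).eval t) * ((z 1).eval t) * h0_01
    + (((derivative (derivative (y 1))).eval t) * ((z 0).eval t) - ((derivative (derivative (z 1))).eval t) * ((y 0).eval t)) * h2_10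
    + (((derivative (y 1)).eval t) * ((z 0).eval t) - ((derivative (z 1)).eval t) * ((y 0).eval t)) * h1_10
    + ((y 1).eval t) * ((z 0).eval t) * h0_10
    + (((derivative (derivative (y 1))).eval t) * ((z 1).eval t) - ((derivative (derivative (z 1))).eval t) * ((y 1).eval t)) * h2_11
    + (((derivative (y 1)).eval t) * ((z 1).eval t) - ((derivative (z 1)).eval t) * ((y 1).eval t)) * h1_11
    + ((y 1).eval t) * ((z 1).eval t) * h0_11)

/-- Symmetry of `𝒟`, for every `ζ`. -/
lemma form_Maps {a : ℝ} (ha : a ^ 2 > 2) (ζ : ℝ) {y z w k : Row} (hy : Maps a y w)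
    (hz : Maps a z k) : form ha ζ w z = form ha ζ y k := by
  have h0 : ∀ {y w : Row}, Maps a y w → (w 1).eval 0 = 0 := by
    intro y w h
    rw [← h 0 1]
    simp [Drow, F2cal, F1cal, F0cal]
  have h1 := integral_eq_zero_of_hasDerivAt_of_integrable (hasDerivAt_conc ha hy hz)
    (integrable_eval_mul_rho ha _) (integrable_eval_mul_rho ha _)
  have h2 : Lfun a (quad a w z - quad a y k) = 0 := by rw [Lfun, h1, mul_zero]
  -- The integral parts agree, and the point mass does not see `𝒟(y)` and `𝒟(z)`.
  have h3 : quad a w z = (quad a w z - quad a y k) + quad a y k := by ring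
  rw [form_apply, form_apply, h3, Lfun_add ha, h2, h0 hy, h0 hz]
  ring

/-! ### A flag of invariant subspaces -/

lemma Maps.add {a : ℝ} {y z w k : Row} (hy : Maps a y w) (hz : Maps a z k) :
    Maps a (y + z) (w + k) := by
  intro t j
  have h1 := hy t j
  have h2 := hz t j
  simp only [Drow, Fin.sum_univ_two, Pi.add_apply, derivative_add, eval_add] at *
  linear_combination h1 + h2

lemma Maps.smul {a : ℝ} (c : ℝ) {y w : Row} (hy : Maps a y w) : Maps a (c • y) (c • w) := by
  intro t j
  have h1 := hy t j
  simp only [Drow, Fin.sum_univ_two, Pi.smul_apply, derivative_smul, eval_smul, smul_eq_mul] at *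
  linear_combination c * h1

/-- Two rows of degree `n` whose leading coefficients are the unit vectors. For `n = 0` the lower
terms vanish because of the factor `n`, so the truncated exponent `n - 1` is harmless; for `n = 1`
the denominators vanish and the value is not used. -/
def brow (a : ℝ) (n : ℕ) : Fin 2 → Row :=
  ![![X ^ n, C (-(n * a / (2 * (n - 1)))) * X ^ (n - 1)],
    ![C (n * a / ((a ^ 2 - 2) * (n - 1))) * X ^ (n - 1), X ^ n]]

/-- The span of the rows `brow a k i` with `k < n` and `k ≠ 1`. -/
def Slt (a : ℝ) (n : ℕ) : Submodule ℝ Row :=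
  Submodule.span ℝ ((fun p : ℕ × Fin 2 => brow a p.1 p.2) '' {p | p.1 < n ∧ p.1 ≠ 1})

lemma brow_mem {a : ℝ} {k n : ℕ} (hk : k < n) (hk1 : k ≠ 1) (i : Fin 2) : brow a k i ∈ Slt a n :=
  Submodule.subset_span ⟨(k, i), ⟨hk, hk1⟩, rfl⟩

lemma Slt_mono {a : ℝ} {m n : ℕ} (h : m ≤ n) : Slt a m ≤ Slt a n :=
  Submodule.span_mono (Set.image_mono fun _ hp => ⟨hp.1.trans_le h, hp.2⟩)

instance (a : ℝ) (n : ℕ) : FiniteDimensional ℝ (Slt a n) := by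
  refine FiniteDimensional.span_of_finite ℝ (Set.Finite.image _ ?_)
  exact ((Set.finite_Iio n).prod (Set.finite_univ (α := Fin 2))).subset
    fun p hp => ⟨hp.1, trivial⟩

/-- If `c t y₀' - a y₁' = 𝔭 r` with `c = a² - 2`, then eliminating `y₁'` and `y₁''` cancels the
poles of `𝒟(y)` and leaves the stated polynomials. -/
lemma maps_aux {a : ℝ} (ha : a ^ 2 > 2) {y w : Row} (r : ℝ[X])
    (h : C (a ^ 2 - 2) * X * derivative (y 0) - C a * derivative (y 1) = pPoly a * r)
    (h0 : w 0 = derivative (derivative (y 0)) - C (4 / (a ^ 2 - 2)) * X * derivative r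
      - C (2 * (a ^ 2 - 2) / a ^ 2) * (X * derivative (y 0) - y 0)
      + (C (8 / a ^ 2) * X ^ 2 - C (8 / (a ^ 2 - 2))) * r)
    (h1 : w 1 = C (1 / a) * (C (a ^ 2 - 2) * X * derivative (derivative (y 0)) - 8 * X * r
      - 4 * X ^ 2 * derivative r)) : Maps a y w := by
  have ha0 : a ≠ 0 := by rintro rfl; norm_num at ha
  have hc : a ^ 2 - 2 ≠ 0 := by linarith
  intro t j
  have hp := (pfrak_neg ha t).ne
  have e1 := congrArg (eval t) h
  have e2 := congrArg (eval t) (congrArg derivative h)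
  simp [pPoly, -map_pow] at e1 e2
  have u2 : (derivative (y 1)).eval t = ((a ^ 2 - 2) * t * (derivative (y 0)).eval t
    - pfrak a t * r.eval t) / a := by
    rw [pfrak]; field_simp; linear_combination -e1
  have v2 : (derivative (derivative (y 1))).eval t = ((a ^ 2 - 2) * (derivative (y 0)).eval t
    + (a ^ 2 - 2) * t * (derivative (derivative (y 0))).eval t
    + 4 * (a ^ 2 - 2) * t * r.eval t - pfrak a t * (derivative r).eval t) / a := by
    rw [pfrak]; field_simp; linear_combination -e2
  unfold pfrak at hp
  fin_cases j
  · simp [Drow, h0, u2, v2, F2cal, F1cal, F0cal]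
    unfold pfrak
    field_simp
    ring
  · simp [Drow, h1, u2, v2, F2cal, F1cal, F0cal]
    unfold pfrak
    field_simp
    ring

/-- `𝒟` is triangular on the rows `brow`: for large `n` it maps `brow a n 0` to a combination of
itself and `brow a (n - 1) 1`, and `brow a n 1` to one of `brow a (n - 1) 0` and
`brow a (n - 2) 1`. For small `n` the missing index `1` is replaced by `0` or does not occur. -/
lemma maps_brow {a : ℝ} (ha : a ^ 2 > 2) {n : ℕ} (hn : n ≠ 1) (i : Fin 2) :
    ∃ w ∈ Slt a (n + 1), Maps a (brow a n i) w := by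
  have ha0 : a ≠ 0 := by rintro rfl; norm_num at ha
  have hc : a ^ 2 - 2 ≠ 0 := by linarith
  match n, i with
  | 0, 0 =>
    refine ⟨(2 * (a ^ 2 - 2) / a ^ 2) • brow a 0 0,
      Submodule.smul_mem _ _ (brow_mem (by omega) (by omega) _), maps_aux ha 0 ?_ ?_ ?_⟩ <;>
    · simp [brow, smul_eq_C_mul]
  | 0, 1 =>
    refine ⟨0, zero_mem _, maps_aux ha 0 ?_ ?_ ?_⟩ <;> simp [brow]
  | 1, _ => exact absurd rfl hn
  | 2, 0 =>
    refine ⟨(-(2 / a ^ 2) * (a ^ 2 + 2)) • brow a 2 0 + (2 + 8 / (a ^ 2 - 2)) • brow a 0 0,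
      add_mem (Submodule.smul_mem _ _ (brow_mem (by omega) (by omega) _))
        (Submodule.smul_mem _ _ (brow_mem (by omega) (by omega) _)), maps_aux ha (C (-1)) ?_ ?_ ?_⟩
    all_goals
      refine Polynomial.funext fun t => ?_
      simp [brow, pPoly]
      try field_simp
      try ring
  | 2, 1 =>
    refine ⟨0, zero_mem _, maps_aux ha 0 ?_ ?_ ?_⟩
    all_goals
      refine Polynomial.funext fun t => ?_
      simp [brow, pPoly]
      try field_simp
      try ring
  | m + 3, 0 =>
    have hm : (m : ℝ) + 2 ≠ 0 := by positivity
    have hm1 : (m : ℝ) + 3 - 1 = m + 2 := by ring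
    refine ⟨(-(2 / a ^ 2) * ((a ^ 2 - 2) * (m + 2) + 2 * (m + 3))) • brow a (m + 3) 0
        + ((m + 3) / a * ((a ^ 2 - 2) * (m + 2) + 2 * (m + 3)) * (m + 1) / (m + 2)) •
          brow a (m + 2) 1,
      add_mem (Submodule.smul_mem _ _ (brow_mem (by omega) (by omega) _))
        (Submodule.smul_mem _ _ (brow_mem (by omega) (by omega) _)),
        maps_aux ha (C (-(((m : ℝ) + 3) / 2)) * X ^ (m + 1)) ?_ ?_ ?_⟩
    all_goals
      have hm' : (m : ℝ) + 1 ≠ 0 := by positivity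
      have hm2 : (m : ℝ) + 2 - 1 = m + 1 := by ring
      refine Polynomial.funext fun t => ?_
      simp [brow, pPoly, hm1, hm2]
      try field_simp
      try ring
  | 3, 1 =>
    refine ⟨(-(3 / a)) • brow a 2 0 + (3 * a / (a ^ 2 - 2)) • brow a 0 0,
      add_mem (Submodule.smul_mem _ _ (brow_mem (by omega) (by omega) _))
        (Submodule.smul_mem _ _ (brow_mem (by omega) (by omega) _)), maps_aux ha 0 ?_ ?_ ?_⟩
    all_goals
      refine Polynomial.funext fun t => ?_
      simp [brow, pPoly]
      try field_simp
      try ring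
  | m + 4, 1 =>
    refine ⟨(-(2 * (m + 4) * (m + 2) / (a * (m + 3)))) • brow a (m + 3) 0
        + (((m : ℝ) + 4) * (m + 1)) • brow a (m + 2) 1,
      add_mem (Submodule.smul_mem _ _ (brow_mem (by omega) (by omega) _))
        (Submodule.smul_mem _ _ (brow_mem (by omega) (by omega) _)), maps_aux ha 0 ?_ ?_ ?_⟩
    all_goals
      have hm3 : (m : ℝ) + 3 ≠ 0 := by positivity
      have hm2' : (m : ℝ) + 2 ≠ 0 := by positivity
      have hm' : (m : ℝ) + 1 ≠ 0 := by positivity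
      have hm1 : (m : ℝ) + 3 - 1 = m + 2 := by ring
      have hm2 : (m : ℝ) + 2 - 1 = m + 1 := by ring
      have hm4 : (m : ℝ) + 4 - 1 = m + 3 := by ring
      refine Polynomial.funext fun t => ?_
      simp [brow, pPoly, hm1, hm2, hm4]
      try field_simp
      try ring

lemma maps_Slt {a : ℝ} (ha : a ^ 2 > 2) {n : ℕ} {y : Row} (hy : y ∈ Slt a n) :
    ∃ w ∈ Slt a n, Maps a y w := by
  induction hy using Submodule.span_induction with
  | mem y hy =>
    obtain ⟨⟨k, i⟩, ⟨hk, hk1⟩, rfl⟩ := hy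
    obtain ⟨w, hw, h⟩ := maps_brow ha hk1 i
    exact ⟨w, Slt_mono hk hw, h⟩
  | zero => exact ⟨0, zero_mem _, fun t j => by simp [Drow]⟩
  | add y z _ _ hy hz =>
    obtain ⟨w, hw, h⟩ := hy
    obtain ⟨k, hk, h'⟩ := hz
    exact ⟨w + k, add_mem hw hk, h.add h'⟩
  | smul c y _ hy =>
    obtain ⟨w, hw, h⟩ := hy
    exact ⟨c • w, Submodule.smul_mem _ _ hw, h.smul c⟩

lemma brow_degree (a : ℝ) (n : ℕ) (i j : Fin 2) : (brow a n i j).degree ≤ n := by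
  have h : ∀ c : ℝ, (C c * X ^ (n - 1) : ℝ[X]).degree ≤ (n : WithBot ℕ) := fun c =>
    (degree_C_mul_X_pow_le _ _).trans (by exact_mod_cast Nat.sub_le n 1)
  fin_cases i <;> fin_cases j
  exacts [degree_X_pow_le n, h _, h _, degree_X_pow_le n]

lemma brow_coeff (a : ℝ) (n : ℕ) (i j : Fin 2) :
    (brow a n i j).coeff n = (1 : M2) i j := by
  have h : ∀ c : ℝ, (n = 0 → c = 0) → (C c * X ^ (n - 1)).coeff n = 0 := by
    intro c hc
    rcases n with _ | n
    · simp [hc rfl]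
    · rw [coeff_C_mul, coeff_X_pow]; simp
  fin_cases i <;> fin_cases j
  · simp [brow]
  · exact h _ (by rintro rfl; simp)
  · exact h _ (by rintro rfl; simp)
  · simp [brow]

lemma Slt_degree {a : ℝ} {n : ℕ} {y : Row} (hy : y ∈ Slt a n) (j : Fin 2) :
    (y j).degree < n := by
  induction hy using Submodule.span_induction with
  | mem y hy =>
    obtain ⟨⟨k, i⟩, ⟨hk, -⟩, rfl⟩ := hy
    exact (brow_degree a k i j).trans_lt (by exact_mod_cast hk)
  | zero => simp
  | add y z _ _ hy hz => exact (degree_add_le _ _).trans_lt (max_lt hy hz)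
  | smul c y _ hy => exact (degree_smul_le c (y j)).trans_lt hy

lemma Slt_succ {a : ℝ} {n : ℕ} {x : Row} (hx : x ∈ Slt a (n + 1)) :
    ∃ c : Fin 2 → ℝ, x - ∑ i, c i • brow a n i ∈ Slt a n := by
  have hle : Slt a (n + 1) ≤ Slt a n ⊔ Submodule.span ℝ (Set.range (brow a n)) := by
    refine Submodule.span_le.2 ?_
    rintro _ ⟨⟨k, i⟩, ⟨hk, hk1⟩, rfl⟩
    rcases (Nat.lt_succ_iff.1 hk).lt_or_eq with h | rfl
    · exact Submodule.mem_sup_left (brow_mem h hk1 i)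
    · exact Submodule.mem_sup_right (Submodule.subset_span ⟨i, rfl⟩)
  obtain ⟨u, hu, v, hv, rfl⟩ := Submodule.mem_sup.1 (hle hx)
  obtain ⟨c, rfl⟩ := (Submodule.mem_span_range_iff_exists_fun ℝ).1 hv
  exact ⟨c, by simpa using hu⟩

/-! ### Orthogonalization -/

/-- Orthogonal projection to a finite-dimensional subspace for an anisotropic form. -/
lemma exists_proj {V : Type*} [AddCommGroup V] [Module ℝ V] (B : LinearMap.BilinForm ℝ V)
    (hB : ∀ v, B v v = 0 → v = 0) (W : Submodule ℝ V) [FiniteDimensional ℝ W] (v : V) :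
    ∃ w ∈ W, ∀ x ∈ W, B (v - w) x = 0 := by
  have hinj : Function.Injective (B.restrict W) := by
    refine (injective_iff_map_eq_zero _).2 fun w hw => ?_
    exact Subtype.ext (hB w (LinearMap.congr_fun hw w))
  have hsurj : Function.Surjective (B.restrict W) :=
    (LinearMap.injective_iff_surjective_of_finrank_eq_finrank
      (Subspace.dual_finrank_eq (K := ℝ) (V := W)).symm).1 hinj
  obtain ⟨w, hw⟩ := hsurj ((B v).domRestrict W)
  refine ⟨w, w.2, fun x hx => ?_⟩
  have : B w x = B v x := LinearMap.congr_fun hw ⟨x, hx⟩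
  rw [map_sub, LinearMap.sub_apply, this, sub_self]

/-- Rows `p i` congruent to `brow a n i` modulo `Slt a n` and orthogonal to `Slt a n` have a span
that is invariant under `𝒟`. -/
lemma exists_eigen {a : ℝ} (ha : a ^ 2 > 2) {ζ : ℝ} (hζ : 0 ≤ ζ) {n : ℕ} (hn : n ≠ 1)
    {p : Fin 2 → Row} (hpo : ∀ i, ∀ x ∈ Slt a n, form ha ζ (p i) x = 0)
    (hp : ∀ i, brow a n i - p i ∈ Slt a n) (i : Fin 2) :
    ∃ b : Fin 2 → ℝ, Maps a (p i) (∑ k, b k • p k) := by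
  have hpS : p i ∈ Slt a (n + 1) := by
    have := sub_mem (brow_mem n.lt_succ_self hn i) (Slt_mono n.le_succ (hp i))
    rwa [sub_sub_cancel] at this
  obtain ⟨x, hx, hmap⟩ := maps_Slt ha hpS
  obtain ⟨b, hb⟩ := Slt_succ hx
  refine ⟨b, ?_⟩
  -- `d` is the component of `𝒟(p i)` in `Slt a n`; by symmetry it is orthogonal to itself.
  obtain ⟨d, hd⟩ : ∃ d, d = x - ∑ k, b k • p k := ⟨_, rfl⟩
  have hdS : d ∈ Slt a n := by
    have : d = (x - ∑ k, b k • brow a n k) + ∑ k, b k • (brow a n k - p k) := by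
      simp only [hd, smul_sub, Finset.sum_sub_distrib]; abel
    rw [this]
    exact add_mem hb (Submodule.sum_mem _ fun k _ => Submodule.smul_mem _ _ (hp k))
  obtain ⟨e, heS, he⟩ := maps_Slt ha hdS
  have h1 : form ha ζ x d = 0 := by
    rw [form_Maps ha ζ hmap he]; exact hpo i e heS
  have h2 : form ha ζ (∑ k, b k • p k) d = 0 := by
    simp only [map_sum, map_smul, LinearMap.sum_apply, LinearMap.smul_apply, smul_eq_mul]
    exact Finset.sum_eq_zero fun k _ => by rw [hpo k d hdS, mul_zero]
  have h3 : form ha ζ d d = 0 := by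
    have h4 : form ha ζ d = form ha ζ x - form ha ζ (∑ k, b k • p k) := by rw [hd, map_sub]
    rw [h4, LinearMap.sub_apply, h1, h2, sub_zero]
  have h5 : x = ∑ k, b k • p k := sub_eq_zero.1 (hd ▸ form_posDef ha hζ d h3)
  rwa [← h5]

/-- For every `ζ ≥ 0` there exist matrix polynomials `𝒫ₙ^ζ`, `n ≠ 1`,
of degree `n` with nonsingular leading coefficient, orthogonal with respect to the weight
`(1/√π)𝒲_a + ζ·diag(0,1)·δ₀` with nonsingular norms, which are eigenfunctions of the
second order operator `𝒟` (which does not depend on `ζ`). -/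
theorem exceptional_with_dirac_delta (a : ℝ) (ha : a ^ 2 > 2) :
    ∀ ζ : ℝ, 0 ≤ ζ →
      ∃ Pz : ℕ → MP2, ∀ n : ℕ, n ≠ 1 →
        (∀ i j, ((Pz n) i j).degree ≤ (n : ℕ)) ∧
        IsUnit (Matrix.of fun i j => ((Pz n) i j).coeff n) ∧
        (∀ m : ℕ, m ≠ 1 → n ≠ m → ipZeta a ζ (Pz n) (Pz m) = 0) ∧
        IsUnit (ipZeta a ζ (Pz n) (Pz n)) ∧
        ∃ B : M2, ∀ t : ℝ, Dcal a (Pz n) t = B * mpEval (Pz n) t := by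
  intro ζ hζ
  set B := form ha ζ with hB
  have hsymm : ∀ y z, B y z = B z y := form_symm ha ζ
  have hdef : ∀ y, B y y = 0 → y = 0 := form_posDef ha hζ
  choose w hwS hw using fun (n : ℕ) (i : Fin 2) => exists_proj B hdef (Slt a n) (brow a n i)
  let p : ℕ → Fin 2 → Row := fun n i => brow a n i - w n i
  have hpS : ∀ n, n ≠ 1 → ∀ i, p n i ∈ Slt a (n + 1) := fun n hn i =>
    sub_mem (brow_mem n.lt_succ_self hn i) (Slt_mono n.le_succ (hwS n i))
  have hpo : ∀ n i, ∀ x ∈ Slt a n, B (p n i) x = 0 := hw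
  have hcoeff : ∀ n i j, (p n i j).coeff n = (1 : M2) i j := by
    intro n i j
    have : (w n i j).coeff n = 0 := coeff_eq_zero_of_degree_lt (Slt_degree (hwS n i) j)
    simp [p, brow_coeff, this]
  refine ⟨fun n => Matrix.of (p n), fun n hn => ⟨?_, ?_, ?_, ?_, ?_⟩⟩
  · intro i j
    exact (degree_sub_le _ _).trans (max_le (brow_degree a n i j) (Slt_degree (hwS n i) j).le)
  · have : (Matrix.of fun i j => ((Matrix.of (p n) : MP2) i j).coeff n) = (1 : M2) := by
      ext i j; exact hcoeff n i j
    rw [this]; exact isUnit_one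
  · intro m hm hnm
    ext i j
    rw [ipZeta_apply ha]
    change B (p n i) (p m j) = 0
    rcases hnm.lt_or_gt with h | h
    · rw [hsymm]; exact hpo m j _ (Slt_mono h (hpS n hn i))
    · exact hpo n i _ (Slt_mono h (hpS m hm j))
  · rw [← Matrix.vecMul_injective_iff_isUnit]
    refine (injective_iff_map_eq_zero (Matrix.vecMulLinear _)).2 fun v hv => ?_
    have h1 : ∑ i, v i • p n i = 0 := by
      apply hdef
      have h2 : ∀ j, ∑ i, v i * B (p n i) (p n j) = 0 := by
        intro j
        have := congrFun hv j
        simp only [Matrix.vecMulLinear_apply, Matrix.vecMul, dotProduct, ipZeta_apply ha] at this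
        exact this
      simp only [map_sum, map_smul, LinearMap.sum_apply, LinearMap.smul_apply, smul_eq_mul]
      exact Finset.sum_eq_zero fun j _ => by rw [h2 j, mul_zero]
    ext j
    have h3 := congrArg (fun f : Row => (f j).coeff n) h1
    fin_cases j <;> simpa [hcoeff] using h3
  · have key := fun i => exists_eigen ha hζ hn (hpo n)
      (fun k => by simpa [p] using hwS n k) i
    choose b hb using key
    refine ⟨Matrix.of b, fun t => ?_⟩
    ext i j
    rw [Dcal_apply]
    refine (hb i t j).trans ?_
    simp [Matrix.mul_apply, mpEval]
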